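/- arXiv:1109.6521 — 3 statements merged into one kernel-verified Lean document; each statement's English description precedes it below -/
import Mathlib

section
/- For every integer n ≥ 4, the cyclic matching sequencibility of the complete graph K_n equals ⌊(n-1)/2⌋ if n is even, and equals ⌊(n-3)/2⌋ if n is odd. -/
/-- Two edges of a graph (as unordered pairs of vertices) are *disjoint*
if they share no vertex. -/
def edgesDisjoint {V : Type*} (e₁ e₂ : Sym2 V) : Prop :=
  ∀ v : V, v ∈ e₁ → v ∉ e₂

/-- The number of edges of a graph `G`. -/
noncomputable def edgeCount {V : Type*} (G : SimpleGraph V) : ℕ :=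
  Nat.card G.edgeSet

/-- A linear ordering `f` of the edges of `G` has matching number at least `d`
if every `d` consecutive edges in the ordering are pairwise disjoint. -/
def LinearGood {V : Type*} (G : SimpleGraph V)
    (f : Fin (edgeCount G) ≃ G.edgeSet) (d : ℕ) : Prop :=
  ∀ j k : Fin (edgeCount G), j ≠ k → (j : ℕ) < (k : ℕ) + d → (k : ℕ) < (j : ℕ) + d →
    edgesDisjoint (f j : Sym2 V) (f k : Sym2 V)

/-- The matching sequencibility `ms G`: the largest `d` (necessarily at most the
number of edges) for which some linear ordering of the edges of `G` has every
`d` consecutive edges forming a matching. -/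
noncomputable def ms {V : Type*} (G : SimpleGraph V) : ℕ :=
  sSup {d : ℕ | d ≤ edgeCount G ∧ ∃ f : Fin (edgeCount G) ≃ G.edgeSet, LinearGood G f d}

/-- A cyclic ordering `f : ZMod N ≃ edges of G` has cyclic matching number at least `d`
if every `d` cyclically consecutive edges in the ordering are pairwise disjoint. -/
def CyclicGood {V : Type*} (G : SimpleGraph V) {N : ℕ}
    (f : ZMod N ≃ G.edgeSet) (d : ℕ) : Prop :=
  ∀ (i : ZMod N) (j k : ℕ), j < d → k < d → j ≠ k →
    edgesDisjoint (f (i + (j : ZMod N)) : Sym2 V) (f (i + (k : ZMod N)) : Sym2 V)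

/-- The cyclic matching sequencibility `cms G`: the largest `d` for which some
cyclic ordering of the edges of `G` has every `d` cyclically consecutive edges
forming a matching. -/
noncomputable def cms {V : Type*} (G : SimpleGraph V) : ℕ :=
  sSup {d : ℕ | ∃ f : ZMod (edgeCount G) ≃ G.edgeSet, CyclicGood G f d}

section Upper

/-- The sequence obtained by unrolling a cyclic ordering whose `d` consecutive edges are
disjoint, in the complete graph on `2 * d + 1` vertices. -/
structure OddSeq (d m n : ℕ) (F : ℕ → Sym2 (Fin n)) : Prop where
  hn : n = 2 * d + 1
  nd : ∀ t, ¬ (F t).IsDiag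
  inj : ∀ s t, s < t → t < s + m → F s ≠ F t
  per : ∀ t, F (t + m) = F t
  disj : ∀ s t, s < t → t < s + d → edgesDisjoint (F s) (F t)
  cnt : ∀ v, ((Finset.range m).filter (fun t => v ∈ F t)).card = 2 * d

lemma card_cover {n d : ℕ} (F : ℕ → Sym2 (Fin n)) (nd : ∀ t, ¬ (F t).IsDiag)
    (disj : ∀ s t, s < t → t < d → edgesDisjoint (F s) (F t)) :
    ((Finset.range d).biUnion (fun j => (F j).toFinset)).card = 2 * d := by
  rw [Finset.card_biUnion]
  · rw [Finset.sum_congr rfl (fun j _ => Sym2.card_toFinset_of_not_isDiag _ (nd j))]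
    simp [mul_comm]
  · intro s hs t ht hst
    have hs := Finset.mem_range.1 hs
    have ht := Finset.mem_range.1 ht
    show Disjoint (F s).toFinset (F t).toFinset
    rw [Finset.disjoint_left]
    intro v hv hv'
    rw [Sym2.mem_toFinset] at hv hv'
    rcases lt_or_gt_of_ne hst with h | h
    · exact disj s t h ht v hv hv'
    · exact disj t s h hs v hv' hv

namespace OddSeq
variable {d m n : ℕ} {F : ℕ → Sym2 (Fin n)}

lemma shift (h : OddSeq d m n F) (z : ℕ) : OddSeq d m n (fun t => F (z + t)) where
  hn := h.hn
  nd t := h.nd _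
  inj s t h1 h2 := h.inj _ _ (by omega) (by omega)
  per t := by rw [← add_assoc]; exact h.per _
  disj s t h1 h2 := h.disj _ _ (by omega) (by omega)
  cnt v := by
    have key : ∀ z, ((Finset.range m).filter (fun t => v ∈ F (z + t))).card = 2 * d := by
      intro z
      induction z with
      | zero => simpa using h.cnt v
      | succ z ih =>
        rw [← ih, Finset.card_filter, Finset.card_filter]
        have h1 := Finset.sum_range_succ (fun t => if v ∈ F (z + t) then 1 else 0) m
        have h2 := Finset.sum_range_succ' (fun t => if v ∈ F (z + t) then 1 else 0) m
        have h3 := h.per z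
        simp only [h3, add_zero] at h1 h2
        rw [h1] at h2
        have h4 := Nat.add_right_cancel h2
        rw [h4]
        refine Finset.sum_congr rfl fun t _ => ?_
        rw [show z + 1 + t = z + (t + 1) by omega]
    exact key z

lemma cover (h : OddSeq d m n F) (z : ℕ) (v w : Fin n) (hv : ∀ j < d, v ∉ F (z + j))
    (hw : ∀ j < d, w ∉ F (z + j)) : v = w := by
  by_contra hne
  have h1 := card_cover (d := d) (fun j => F (z + j)) (fun t => h.nd _)
    (fun s t h1 h2 => h.disj _ _ (by omega) (by omega))
  set S := (Finset.range d).biUnion (fun j => (F (z + j)).toFinset) with hS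
  have hvS : v ∉ S := by
    simp only [hS, Finset.mem_biUnion, Finset.mem_range, Sym2.mem_toFinset, not_exists, not_and]
    exact hv
  have hwS : w ∉ S := by
    simp only [hS, Finset.mem_biUnion, Finset.mem_range, Sym2.mem_toFinset, not_exists, not_and]
    exact hw
  have h2 : (insert v (insert w S)).card = 2 * d + 2 := by
    rw [Finset.card_insert_of_notMem, Finset.card_insert_of_notMem hwS, h1]
    simp [hne, hvS]
  have h3 := Finset.card_le_univ (insert v (insert w S))
  rw [h2, Fintype.card_fin, h.hn] at h3
  omega

lemma eq_of_two (h : OddSeq d m n F) {s t : ℕ} {v w : Fin n} (hvw : v ≠ w)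
    (h1 : v ∈ F s) (h2 : w ∈ F s) (h3 : v ∈ F t) (h4 : w ∈ F t) : F s = F t := by
  rw [(Sym2.mem_and_mem_iff hvw).1 ⟨h1, h2⟩, (Sym2.mem_and_mem_iff hvw).1 ⟨h3, h4⟩]

lemma exists_pair (h : OddSeq d m n F) (t : ℕ) {v : Fin n} (hv : v ∈ F t) :
    ∃ x, x ≠ v ∧ x ∈ F t :=
  ⟨Sym2.Mem.other hv, Sym2.other_ne (h.nd t) hv, Sym2.other_mem hv⟩

lemma share (h : OddSeq d m n F) (z : ℕ) : ∃ x, x ∈ F z ∧ x ∈ F (z + d) := by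
  by_contra hno
  push Not at hno
  obtain ⟨v, hv⟩ : ∃ v, v ∈ F (z + d) := by
    induction F (z + d) using Sym2.ind with
    | _ x y => exact ⟨x, by simp⟩
  obtain ⟨w, hwv, hw⟩ := h.exists_pair _ hv
  have key : ∀ u ∈ F (z + d), ∀ j < d, u ∉ F (z + j) := by
    intro u hu j hj huj
    rcases Nat.eq_zero_or_pos j with rfl | hj0
    · exact hno u huj hu
    · exact h.disj (z + j) (z + d) (by omega) (by omega) u huj hu
  exact hwv (h.cover z w v (key w hw) (key v hv))

lemma next (h : OddSeq d m n F) (hd : 2 ≤ d) (hm : d < m) (z : ℕ) {v : Fin n}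
    (hv : v ∈ F z) : v ∈ F (z + d) ∨ v ∈ F (z + d + 1) := by
  by_contra hno
  push Not at hno
  obtain ⟨hA, hB⟩ := hno
  have hvm : ∀ j < d, v ∉ F (z + 1 + j) := by
    intro j hj hvj
    by_cases hjd : j + 1 = d
    · apply hA; rwa [← hjd, show z + (j + 1) = z + 1 + j by omega]
    · exact h.disj z (z + 1 + j) (by omega) (by omega) v hv hvj
  have key : ∀ u ∈ F (z + d + 1), u ∈ F (z + 1) := by
    intro u hu
    by_contra hu1
    have : u = v := by
      apply h.cover (z + 1) u v _ hvm
      intro j hj huj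
      rcases Nat.eq_zero_or_pos j with rfl | hj0
      · exact hu1 huj
      · exact h.disj (z + 1 + j) (z + d + 1) (by omega) (by omega) u huj hu
    exact hB (this ▸ hu)
  obtain ⟨x, hx1, hx2⟩ := h.share (z + 1)
  rw [show z + 1 + d = z + d + 1 by omega] at hx2
  obtain ⟨y, hyx, hy⟩ := h.exists_pair _ hx2
  exact h.inj (z + 1) (z + d + 1) (by omega) (by omega)
    (h.eq_of_two hyx (key y hy) hx1 hy hx2)

lemma infinite (h : OddSeq d m n F) (hm : 0 < m) (v : Fin n) (hv : v ∈ F 0) :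
    (Set.ofPred (fun t => v ∈ F t)).Infinite := by
  have : ∀ k, v ∈ F (k * m) := by
    intro k
    induction k with
    | zero => simpa using hv
    | succ k ih => rw [Nat.succ_mul, h.per]; exact ih
  apply Set.infinite_of_injective_forall_mem (f := fun k : ℕ => k * m) _ this
  intro a b hab
  exact Nat.eq_of_mul_eq_mul_right hm hab

lemma nth_zero' (v : Fin n) (hv : v ∈ F 0) : Nat.nth (fun t => v ∈ F t) 0 = 0 :=
  Nat.nth_zero_of_zero hv

lemma nth_top (h : OddSeq d m n F) (v : Fin n) (hv : v ∈ F 0) :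
    Nat.nth (fun t => v ∈ F t) (2 * d) = m := by
  have hvm : v ∈ F m := by have := h.per 0; rw [zero_add] at this; rwa [this]
  have h1 : Nat.count (fun t => v ∈ F t) m = 2 * d := by
    rw [Nat.count_eq_card_filter_range]; exact h.cnt v
  rw [← h1]
  exact Nat.nth_count (p := fun t => v ∈ F t) hvm

lemma nth_gap (h : OddSeq d m n F) (hd : 2 ≤ d) (hm : d < m) (v : Fin n)
    (hv : v ∈ F 0) (k : ℕ) :
    Nat.nth (fun t => v ∈ F t) (k + 1) = Nat.nth (fun t => v ∈ F t) k + d ∨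
    Nat.nth (fun t => v ∈ F t) (k + 1) = Nat.nth (fun t => v ∈ F t) k + d + 1 := by
  have hinf := h.infinite (by omega) v hv
  have h1 := Nat.nth_mem_of_infinite hinf k
  have h2 := Nat.nth_mem_of_infinite hinf (k + 1)
  have h3 := Nat.nth_strictMono hinf (show k < k + 1 by omega)
  have h4 : ∀ a, a < Nat.nth (fun t => v ∈ F t) (k + 1) → v ∈ F a →
      a ≤ Nat.nth (fun t => v ∈ F t) k := fun a ha hva => Nat.le_nth_of_lt_nth_succ ha hva
  have h5 : Nat.nth (fun t => v ∈ F t) k + d ≤ Nat.nth (fun t => v ∈ F t) (k + 1) := by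
    by_contra hlt
    exact h.disj _ _ h3 (by omega) v h1 h2
  by_contra hno
  push Not at hno
  rcases h.next hd hm _ h1 with h6 | h6
  · have := h4 _ (by omega) h6
    omega
  · have := h4 _ (by omega) h6
    omega

lemma no_overtake (h : OddSeq d m n F) (hd : 2 ≤ d) (hm : 2 * d + 2 < m) {x v : Fin n}
    (hxv : x ≠ v) (hx : x ∈ F 0) (hv : v ∈ F 0) (hxd : x ∈ F d) (hvd : v ∉ F d)
    (hxm : x ∈ F (m - d)) (hvm : v ∉ F (m - d)) : False := by
  have ga := h.nth_gap hd (by omega) x hx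
  have gb := h.nth_gap hd (by omega) v hv
  have a0 := nth_zero' x hx
  have b0 := nth_zero' v hv
  have aT := h.nth_top x hx
  have bT := h.nth_top v hv
  have ma := Nat.nth_mem_of_infinite (h.infinite (by omega) x hx)
  have mb := Nat.nth_mem_of_infinite (h.infinite (by omega) v hv)
  have sa := Nat.nth_strictMono (h.infinite (by omega) x hx)
  set a := Nat.nth (fun t => x ∈ F t)
  set b := Nat.nth (fun t => v ∈ F t)
  have hT : 2 * d - 1 + 1 = 2 * d := by omega
  have a1 : a 1 = d := by
    rcases ga 0 with h1 | h1
    · simpa [a0] using h1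
    · exfalso
      have h2 := ma 1
      simp only [zero_add, a0] at h1
      rw [h1] at h2
      exact h.disj d (d + 1) (by omega) (by omega) x hxd h2
  have b1 : b 1 = d + 1 := by
    rcases gb 0 with h1 | h1
    · exfalso
      have h2 := mb 1
      simp only [zero_add, b0] at h1
      rw [h1] at h2
      exact hvd h2
    · simpa [b0] using h1
  have aE : a (2 * d - 1) = m - d := by
    have h1 := ga (2 * d - 1)
    rw [hT, aT] at h1
    rcases h1 with h1 | h1
    · omega
    · exfalso
      have h2 := ma (2 * d - 1)
      exact h.disj (a (2 * d - 1)) (m - d) (by omega) (by omega) x h2 hxm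
  have bE : b (2 * d - 1) + 1 = m - d := by
    have h1 := gb (2 * d - 1)
    rw [hT, bT] at h1
    rcases h1 with h1 | h1
    · exfalso
      have h2 := mb (2 * d - 1)
      rw [show b (2 * d - 1) = m - d by omega] at h2
      exact hvm h2
    · omega
  have hne : ∀ k, 1 ≤ k → k ≤ 2 * d - 1 → a k ≠ b k := by
    intro k hk1 hk2 hab
    have h1 := ma k
    have h2 := mb k
    rw [← hab] at h2
    have h3 : a 0 < a k := sa (by omega)
    have h4 : a k < a (2 * d) := sa (by omega)
    exact h.inj 0 (a k) (by omega) (by omega) (h.eq_of_two hxv hx hv h1 h2)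
  have hlt : ∀ k, 1 ≤ k → k ≤ 2 * d - 1 → a k < b k := by
    intro k hk
    induction k, hk using Nat.le_induction with
    | base => intro _; omega
    | succ k hk ih =>
      intro hk2
      have h1 := ih (by omega)
      have h2 := hne (k + 1) (by omega) hk2
      have h3 := ga k
      have h4 := gb k
      omega
  have := hlt (2 * d - 1) (by omega) le_rfl
  omega

lemma stay (h : OddSeq d m n F) (hd : 2 ≤ d) (hm : 2 * d + 2 < m) (z : ℕ) {v : Fin n}
    (hv : v ∈ F (z + d)) (hv0 : v ∉ F z) : v ∈ F (z + d + d) := by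
  by_contra hv2
  obtain ⟨x, hxv, hx⟩ := h.exists_pair _ hv
  have only : ∀ u ∈ F (z + d), u ≠ v → u = x := by
    intro u hu huv
    rw [(Sym2.mem_and_mem_iff hxv).1 ⟨hx, hv⟩] at hu
    simpa [huv] using hu
  have hx0 : x ∈ F z := by
    obtain ⟨u, hu1, hu2⟩ := h.share z
    rw [← only u hu2 (fun e => hv0 (e ▸ hu1))]; exact hu1
  have hx2 : x ∈ F (z + d + d) := by
    obtain ⟨u, hu1, hu2⟩ := h.share (z + d)
    rw [← only u hu1 (fun e => hv2 (e ▸ hu2))]; exact hu2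
  have hE : F (z + d + (m - d)) = F z := by
    rw [show z + d + (m - d) = z + m by omega]; exact h.per z
  exact (h.shift (z + d)).no_overtake hd hm hxv hx hv hx2 hv2
    (by show x ∈ F (z + d + (m - d)); rw [hE]; exact hx0)
    (by show v ∉ F (z + d + (m - d)); rw [hE]; exact hv0)

lemma contra (h : OddSeq d m n F) (hd : 2 ≤ d) (hm : 2 * d + 2 < m) : False := by
  -- the vertex shared by times `0` and `d`, and the new vertex at time `d`
  obtain ⟨x, hx0, hxd⟩ := h.share 0
  rw [zero_add] at hxd
  obtain ⟨v, hvx, hvd⟩ := h.exists_pair _ hxd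
  have hv0 : v ∉ F 0 := fun hv0 =>
    h.inj 0 d (by omega) (by omega) (h.eq_of_two hvx hv0 hx0 hvd hxd)
  have hv2 : v ∈ F (d + d) := by
    have := h.stay hd hm 0 (v := v) (by rwa [zero_add]) hv0
    rwa [zero_add] at this
  have hx2 : x ∉ F (d + d) := fun hx2 =>
    h.inj d (d + d) (by omega) (by omega) (h.eq_of_two hvx hvd hxd hv2 hx2)
  have hx3 : x ∈ F (d + d + 1) := (h.next hd (by omega) d hxd).resolve_left hx2
  have hx4 : x ∉ F (d + 1) := fun hx4 =>
    h.disj d (d + 1) (by omega) (by omega) x hxd hx4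
  have hx5 : x ∈ F (d + 1 + d + d) :=
    h.stay hd hm (d + 1) (by rwa [show d + 1 + d = d + d + 1 by omega]) hx4
  have hv3 : v ∉ F (d + d + d) := by
    intro hv3
    obtain ⟨w, hwv, hw⟩ := h.exists_pair _ hv2
    have hwd : w ∉ F d := fun hwd =>
      h.inj d (d + d) (by omega) (by omega) (h.eq_of_two hwv hwd hvd hw hv2)
    have hw3 := h.stay hd hm d hw hwd
    exact h.inj (d + d) (d + d + d) (by omega) (by omega) (h.eq_of_two hwv hw hv2 hw3 hv3)
  have hv4 := (h.next hd (by omega) (d + d) hv2).resolve_left hv3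
  rw [show d + 1 + d + d = d + d + d + 1 by omega] at hx5
  exact h.inj d (d + d + d + 1) (by omega) (by omega) (h.eq_of_two hvx hvd hxd hv4 hx5)

end OddSeq

lemma edgeCount_top (n : ℕ) : edgeCount (⊤ : SimpleGraph (Fin n)) = n.choose 2 := by
  classical
  unfold edgeCount
  rw [Nat.card_eq_fintype_card, ← SimpleGraph.edgeFinset_card,
    SimpleGraph.card_edgeFinset_top_eq_card_choose_two, Fintype.card_fin]

lemma cast_ne {m s t : ℕ} (h1 : s < t) (h2 : t < s + m) : (s : ZMod m) ≠ (t : ZMod m) := by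
  intro h
  rw [ZMod.natCast_eq_natCast_iff] at h
  have := (Nat.modEq_iff_dvd' h1.le).1 h
  have := Nat.le_of_dvd (by omega) this
  omega

lemma nd_top {n : ℕ} (e : (⊤ : SimpleGraph (Fin n)).edgeSet) : ¬ (e : Sym2 (Fin n)).IsDiag :=
  SimpleGraph.not_isDiag_of_mem_edgeSet _ e.2

lemma unroll_disj {n N d : ℕ} (f : ZMod N ≃ (⊤ : SimpleGraph (Fin n)).edgeSet)
    (hf : CyclicGood _ f d) (s t : ℕ) (h1 : s < t) (h2 : t < s + d) :
    edgesDisjoint (f (s : ZMod N) : Sym2 (Fin n)) (f (t : ZMod N)) := by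
  have := hf (s : ZMod N) 0 (t - s) (by omega) (by omega) (by omega)
  rwa [← Nat.cast_add, ← Nat.cast_add, add_zero, Nat.add_sub_cancel' h1.le] at this

lemma upper_odd {d : ℕ} (hd : 2 ≤ d)
    (f : ZMod (edgeCount (⊤ : SimpleGraph (Fin (2 * d + 1)))) ≃
      (⊤ : SimpleGraph (Fin (2 * d + 1))).edgeSet) (hf : CyclicGood _ f d) : False := by
  classical
  have hm : edgeCount (⊤ : SimpleGraph (Fin (2 * d + 1))) = (2 * d + 1) * d := by
    rw [edgeCount_top, Nat.choose_two_right]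
    rw [show 2 * d + 1 - 1 = d * 2 by omega, ← mul_assoc, Nat.mul_div_cancel _ (by norm_num)]
  generalize edgeCount (⊤ : SimpleGraph (Fin (2 * d + 1))) = m at f hf hm
  have hmpos : 2 * d + 2 < m := by nlinarith
  haveI : NeZero m := ⟨by omega⟩
  have H : OddSeq d m (2 * d + 1) (fun t => (f (t : ZMod m) : Sym2 (Fin (2 * d + 1)))) :=
    { hn := rfl
      nd := fun t => nd_top _
      inj := fun s t h1 h2 h => cast_ne h1 h2 (f.injective (Subtype.ext h))
      per := fun t => by simp
      disj := unroll_disj f hf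
      cnt := by
        intro v
        have h1 : ((⊤ : SimpleGraph (Fin (2 * d + 1))).incidenceFinset v).card = 2 * d := by
          rw [SimpleGraph.card_incidenceFinset_eq_degree, SimpleGraph.complete_graph_degree]
          simp
        refine Eq.trans ?_ h1
        refine Finset.card_bij (fun t _ => (f (t : ZMod m) : Sym2 (Fin (2 * d + 1)))) ?_ ?_ ?_
        · intro t ht
          rw [SimpleGraph.mem_incidenceFinset]
          exact ⟨(f (t : ZMod m)).2, (Finset.mem_filter.1 ht).2⟩
        · intro s hs t ht hst
          have hs' := Finset.mem_range.1 (Finset.mem_filter.1 hs).1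
          have ht' := Finset.mem_range.1 (Finset.mem_filter.1 ht).1
          have he := f.injective (Subtype.ext hst)
          rcases lt_trichotomy s t with h | h | h
          · exact absurd he (cast_ne h (by omega))
          · exact h
          · exact absurd he.symm (cast_ne h (by omega))
        · intro e he
          rw [SimpleGraph.mem_incidenceFinset] at he
          have hz : f ((((f.symm ⟨e, he.1⟩).val : ℕ)) : ZMod m) = ⟨e, he.1⟩ := by
            rw [ZMod.natCast_zmod_val, Equiv.apply_symm_apply]
          refine ⟨(f.symm ⟨e, he.1⟩).val, ?_, ?_⟩
          · rw [Finset.mem_filter, Finset.mem_range]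
            refine ⟨ZMod.val_lt _, ?_⟩
            rw [hz]; exact he.2
          · rw [hz] }
  exact H.contra hd hmpos

lemma upper_even {d : ℕ} (hd : 2 ≤ d)
    (f : ZMod (edgeCount (⊤ : SimpleGraph (Fin (2 * d)))) ≃
      (⊤ : SimpleGraph (Fin (2 * d))).edgeSet) (hf : CyclicGood _ f d) : False := by
  have hm : edgeCount (⊤ : SimpleGraph (Fin (2 * d))) = (2 * d - 1) * d := by
    rw [edgeCount_top, Nat.choose_two_right]
    rw [show 2 * d * (2 * d - 1) = (2 * d - 1) * d * 2 by ring,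
      Nat.mul_div_cancel _ (by norm_num)]
  generalize edgeCount (⊤ : SimpleGraph (Fin (2 * d))) = m at f hf hm
  have hmpos : d < m := by
    have : 3 ≤ 2 * d - 1 := by omega
    nlinarith
  have h1 := card_cover (d := d) (fun t : ℕ => (f (t : ZMod m) : Sym2 (Fin (2 * d))))
    (fun t => nd_top _) (fun s t h1 h2 => unroll_disj f hf s t h1 (by omega))
  have h2 := (Finset.card_eq_iff_eq_univ _).1 (h1.trans (Fintype.card_fin _).symm)
  have key : ∀ v, v ∈ (f (d : ZMod m) : Sym2 (Fin (2 * d))) →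
      v ∈ (f ((0 : ℕ) : ZMod m) : Sym2 (Fin (2 * d))) := by
    intro v hv
    have h3 := Finset.mem_univ v
    rw [← h2, Finset.mem_biUnion] at h3
    obtain ⟨j, hj, hvj⟩ := h3
    rw [Finset.mem_range] at hj
    rw [Sym2.mem_toFinset] at hvj
    rcases Nat.eq_zero_or_pos j with rfl | hj0
    · exact hvj
    · exact absurd hv (unroll_disj f hf j d hj (by omega) v hvj)
  have hne : f ((0 : ℕ) : ZMod m) ≠ f (d : ZMod m) :=
    fun h => cast_ne (by omega) (by omega) (f.injective h)
  apply hne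
  apply Subtype.ext
  have hnd := nd_top (f (d : ZMod m))
  generalize (f (d : ZMod m) : Sym2 (Fin (2 * d))) = e at key hnd
  induction e using Sym2.ind with
  | _ x y =>
    exact (Sym2.mem_and_mem_iff (by simpa using hnd)).1 ⟨key x (by simp), key y (by simp)⟩

end Upper

section Lower

lemma build {V : Type*} [Fintype V] {n d M : ℕ} (hV : Fintype.card V = n)
    (hM : edgeCount (⊤ : SimpleGraph (Fin n)) = M) (hM0 : 0 < M) (a b : ℕ → V)
    (hab : ∀ t, a t ≠ b t)
    (inj : ∀ s t, s < M → t < M → s(a s, b s) = s(a t, b t) → s = t)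
    (per : ∀ t, a (t + M) = a t ∧ b (t + M) = b t)
    (disj : ∀ s t, s < t → t < s + d → a s ≠ a t ∧ a s ≠ b t ∧ b s ≠ a t ∧ b s ≠ b t) :
    ∃ f : ZMod (edgeCount (⊤ : SimpleGraph (Fin n))) ≃ (⊤ : SimpleGraph (Fin n)).edgeSet,
      CyclicGood _ f d := by
  classical
  have hcard : Nat.card (⊤ : SimpleGraph (Fin n)).edgeSet = M := hM
  rw [hM]
  haveI : NeZero M := ⟨by omega⟩
  let φ : V ≃ Fin n := Fintype.equivFinOfCardEq hV
  let E : ℕ → (⊤ : SimpleGraph (Fin n)).edgeSet := fun t =>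
    ⟨s(φ (a t), φ (b t)), by
      rw [SimpleGraph.mem_edgeSet, SimpleGraph.top_adj]
      exact fun h => hab t (φ.injective h)⟩
  have Einj : Function.Injective (fun z : ZMod M => E z.val) := by
    intro z w h
    have h1 : s(φ (a z.val), φ (b z.val)) = s(φ (a w.val), φ (b w.val)) := congrArg Subtype.val h
    have h2 : Sym2.map φ s(a z.val, b z.val) = Sym2.map φ s(a w.val, b w.val) := by
      simpa only [Sym2.map_mk] using h1
    exact ZMod.val_injective M
      (inj _ _ (ZMod.val_lt z) (ZMod.val_lt w) (Sym2.map.injective φ.injective h2))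
  have Ebij : Function.Bijective (fun z : ZMod M => E z.val) := by
    rw [Fintype.bijective_iff_injective_and_card]
    refine ⟨Einj, ?_⟩
    rw [ZMod.card, ← Nat.card_eq_fintype_card, hcard]
  have Eper : ∀ k t, E (t + k * M) = E t := by
    intro k t
    induction k with
    | zero => simp
    | succ k ih =>
      rw [← ih, Nat.succ_mul, ← add_assoc]
      apply Subtype.ext
      show s(φ (a _), φ (b _)) = s(φ (a _), φ (b _))
      rw [(per _).1, (per _).2]
  have Emod : ∀ t, E (t % M) = E t := by
    intro t
    conv_rhs => rw [← Nat.mod_add_div t M, mul_comm]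
    rw [Eper]
  refine ⟨Equiv.ofBijective _ Ebij, ?_⟩
  have hval : ∀ (i : ZMod M) (j : ℕ),
      (Equiv.ofBijective (fun z : ZMod M => E z.val) Ebij) (i + (j : ZMod M)) =
        E (i.val + j) := by
    intro i j
    show E (i + (j : ZMod M)).val = _
    rw [← Emod (i.val + j), ← ZMod.val_natCast, Nat.cast_add, ZMod.natCast_zmod_val]
  have Edisj : ∀ s t, s < t → t < s + d →
      edgesDisjoint (E s : Sym2 (Fin n)) (E t : Sym2 (Fin n)) := by
    intro s t h1 h2 v hv hv'
    obtain ⟨q1, q2, q3, q4⟩ := disj s t h1 h2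
    have hv : v = φ (a s) ∨ v = φ (b s) := Sym2.mem_iff.1 hv
    have hv' : v = φ (a t) ∨ v = φ (b t) := Sym2.mem_iff.1 hv'
    rcases hv with rfl | rfl <;> rcases hv' with h | h
    · exact q1 (φ.injective h)
    · exact q2 (φ.injective h)
    · exact q3 (φ.injective h)
    · exact q4 (φ.injective h)
  intro i j k hj hk hjk
  rw [hval, hval]
  rcases lt_or_gt_of_ne hjk with h | h
  · exact Edisj _ _ (by omega) (by omega)
  · intro v hv hv'
    exact Edisj _ _ (by omega) (by omega) v hv' hv

/-- Small nonzero integers are nonzero modulo `2 * K + 1`. -/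
lemma zne (K : ℕ) (x : ℤ) (h0 : x ≠ 0) (h1 : x < 2 * K + 1) (h2 : -x < 2 * K + 1) :
    (x : ZMod (2 * K + 1)) ≠ 0 := by
  intro h
  rw [ZMod.intCast_zmod_eq_zero_iff_dvd] at h
  have := Int.eq_zero_of_abs_lt_dvd h (by rw [abs_lt]; push_cast; constructor <;> omega)
  exact h0 this

lemma two_cancel (K : ℕ) (x y : ZMod (2 * K + 1)) (h : x + x = y + y) : x = y := by
  have hN : (2 * (K : ZMod (2 * K + 1)) + 1) = 0 := by
    have := ZMod.natCast_self (2 * K + 1); push_cast at this; exact this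
  linear_combination (-(K : ZMod (2 * K + 1))) * h + (x - y) * hN

lemma block (L s t : ℕ) (hL : 0 < L) (h1 : s < t) (h2 : t < s + (L - 1)) :
    (t / L = s / L ∧ s % L < t % L) ∨ (t / L = s / L + 1 ∧ t % L + 2 ≤ s % L) := by
  have e1 := Nat.div_add_mod s L
  have e2 := Nat.div_add_mod t L
  have l1 := Nat.mod_lt s hL
  have l2 := Nat.mod_lt t hL
  have h3 : s / L ≤ t / L := Nat.div_le_div_right h1.le
  have h4 : t / L < s / L + 2 := by
    by_contra hc
    have := Nat.mul_le_mul_left L (not_lt.1 hc)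
    rw [Nat.mul_add] at this
    omega
  rcases (show t / L = s / L ∨ t / L = s / L + 1 by omega) with h | h
  · left; refine ⟨h, ?_⟩; rw [h] at e2; omega
  · right; refine ⟨h, ?_⟩; rw [h, Nat.mul_add] at e2; omega

/-- Disjointness of `{i + j, i - j}` and `{i + l, i - l}`. -/
lemma disj_same (K : ℕ) (i : ZMod (2 * K + 1)) (j l : ℕ) (h1 : j < l) (h2 : l ≤ K) :
    i + j ≠ i + l ∧ i + j ≠ i - l ∧ i - j ≠ i + l ∧ i - j ≠ i - (l : ZMod (2 * K + 1)) := by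
  have A := zne K ((l : ℤ) - j) (by omega) (by omega) (by omega)
  have B := zne K ((l : ℤ) + j) (by omega) (by omega) (by omega)
  push_cast at A B
  refine ⟨fun h => A ?_, fun h => B ?_, fun h => B ?_, fun h => A ?_⟩
  · linear_combination -h
  · linear_combination h
  · linear_combination -h
  · linear_combination h

/-- Disjointness of `{i + j, i - j}` and `{i + 1 + l, i + 1 - l}`. -/
lemma disj_next (K : ℕ) (i : ZMod (2 * K + 1)) (j l : ℕ) (h1 : l + 2 ≤ j) (h2 : j ≤ K) :
    i + j ≠ i + 1 + l ∧ i + j ≠ i + 1 - l ∧ i - j ≠ i + 1 + l ∧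
      i - j ≠ i + 1 - (l : ZMod (2 * K + 1)) := by
  have A := zne K ((j : ℤ) - 1 - l) (by omega) (by omega) (by omega)
  have B := zne K ((j : ℤ) - 1 + l) (by omega) (by omega) (by omega)
  have C := zne K ((j : ℤ) + 1 + l) (by omega) (by omega) (by omega)
  have D := zne K ((j : ℤ) + 1 - l) (by omega) (by omega) (by omega)
  push_cast at A B C D
  refine ⟨fun h => A ?_, fun h => B ?_, fun h => C ?_, fun h => D ?_⟩
  · linear_combination h
  · linear_combination h
  · linear_combination -h
  · linear_combination -h

lemma div_eq_of_cast {K L s t : ℕ} (hs : s < L * (2 * K + 1)) (ht : t < L * (2 * K + 1))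
    (h : ((s / L : ℕ) : ZMod (2 * K + 1)) = ((t / L : ℕ) : ZMod (2 * K + 1)))
    (hj : s % L = t % L) : s = t := by
  have h1 : s / L < 2 * K + 1 := Nat.div_lt_of_lt_mul hs
  have h2 : t / L < 2 * K + 1 := Nat.div_lt_of_lt_mul ht
  rw [ZMod.natCast_eq_natCast_iff] at h
  have h3 := Nat.ModEq.eq_of_lt_of_lt h h1 h2
  rw [← Nat.div_add_mod s L, ← Nat.div_add_mod t L, h3, hj]

/-- Injectivity of `(i, j) ↦ {i + j, i - j}` for `1 ≤ j ≤ K`. -/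
lemma pair_inj (K : ℕ) (i i' : ZMod (2 * K + 1)) (j l : ℕ) (hj0 : 0 < j) (hj : j ≤ K)
    (hl : l ≤ K)
    (h : (i + j = i' + l ∧ i - j = i' - l) ∨
      (i + j = i' - l ∧ i - j = i' + (l : ZMod (2 * K + 1)))) : i = i' ∧ j = l := by
  have hi : i = i' := by
    apply two_cancel
    rcases h with ⟨h1, h2⟩ | ⟨h1, h2⟩ <;> linear_combination h1 + h2
  subst hi
  refine ⟨rfl, ?_⟩
  rcases h with ⟨h1, _⟩ | ⟨h1, _⟩
  · by_contra hne
    have A := zne K ((j : ℤ) - l) (by omega) (by omega) (by omega)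
    push_cast at A
    exact A (by linear_combination h1)
  · exfalso
    have A := zne K ((j : ℤ) + l) (by omega) (by omega) (by omega)
    push_cast at A
    exact A (by linear_combination h1)

lemma lower_odd (K : ℕ) (hK : 2 ≤ K) :
    ∃ f : ZMod (edgeCount (⊤ : SimpleGraph (Fin (2 * K + 1)))) ≃
      (⊤ : SimpleGraph (Fin (2 * K + 1))).edgeSet, CyclicGood _ f (K - 1) := by
  have hm : edgeCount (⊤ : SimpleGraph (Fin (2 * K + 1))) = K * (2 * K + 1) := by
    rw [edgeCount_top, Nat.choose_two_right, show 2 * K + 1 - 1 = 2 * K by omega,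
      show (2 * K + 1) * (2 * K) = K * (2 * K + 1) * 2 by ring,
      Nat.mul_div_cancel _ (by norm_num)]
  refine build (V := ZMod (2 * K + 1)) (ZMod.card _) hm (by positivity)
    (fun t => ((t / K : ℕ) : ZMod (2 * K + 1)) + ((t % K + 1 : ℕ) : ZMod (2 * K + 1)))
    (fun t => ((t / K : ℕ) : ZMod (2 * K + 1)) - ((t % K + 1 : ℕ) : ZMod (2 * K + 1))) ?_ ?_ ?_ ?_
  · intro t h
    have hlt := Nat.mod_lt t (show 0 < K by omega)
    have A := zne K (((t % K + 1 : ℕ) : ℤ) + ((t % K + 1 : ℕ) : ℤ)) (by omega) (by omega) (by omega)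
    apply A
    rw [Int.cast_add, Int.cast_natCast]
    linear_combination h
  · intro s t hs ht h
    have l1 := Nat.mod_lt s (show 0 < K by omega)
    have l2 := Nat.mod_lt t (show 0 < K by omega)
    rw [Sym2.eq_iff] at h
    obtain ⟨h1, h2⟩ := pair_inj K _ _ _ _ (by omega) (by omega) (by omega) h
    exact div_eq_of_cast hs ht h1 (by omega)
  · intro t
    have e1 : (t + K * (2 * K + 1)) / K = t / K + (2 * K + 1) :=
      Nat.add_mul_div_left _ _ (by omega)
    have e2 : (t + K * (2 * K + 1)) % K = t % K := Nat.add_mul_mod_self_left _ _ _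
    simp only [e1, e2]
    rw [Nat.cast_add (t / K), ZMod.natCast_self, add_zero]
    exact ⟨rfl, rfl⟩
  · intro s t h1 h2
    have l1 := Nat.mod_lt s (show 0 < K by omega)
    have l2 := Nat.mod_lt t (show 0 < K by omega)
    rcases block K s t (by omega) h1 h2 with ⟨e, hlt⟩ | ⟨e, hlt⟩
    · simp only [e]
      exact disj_same K _ _ _ (by omega) (by omega)
    · simp only [e]
      rw [Nat.cast_add (s / K), Nat.cast_one]
      exact disj_next K _ _ _ (by omega) (by omega)

lemma lower_even (K : ℕ) (hK : 1 ≤ K) :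
    ∃ f : ZMod (edgeCount (⊤ : SimpleGraph (Fin (2 * K + 2)))) ≃
      (⊤ : SimpleGraph (Fin (2 * K + 2))).edgeSet, CyclicGood _ f K := by
  have hm : edgeCount (⊤ : SimpleGraph (Fin (2 * K + 2))) = (K + 1) * (2 * K + 1) := by
    rw [edgeCount_top, Nat.choose_two_right, show 2 * K + 2 - 1 = 2 * K + 1 by omega,
      show (2 * K + 2) * (2 * K + 1) = (K + 1) * (2 * K + 1) * 2 by ring,
      Nat.mul_div_cancel _ (by norm_num)]
  refine build (V := Option (ZMod (2 * K + 1))) (by rw [Fintype.card_option, ZMod.card]) hm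
    (by positivity)
    (fun t => some (((t / (K + 1) : ℕ) : ZMod (2 * K + 1)) + ((t % (K + 1) : ℕ) : ZMod (2 * K + 1))))
    (fun t => if t % (K + 1) = 0 then none else
      some (((t / (K + 1) : ℕ) : ZMod (2 * K + 1)) - ((t % (K + 1) : ℕ) : ZMod (2 * K + 1))))
    ?_ ?_ ?_ ?_
  · intro t h
    have hlt := Nat.mod_lt t (show 0 < K + 1 by omega)
    split_ifs at h with h0
    have A := zne K (((t % (K + 1) : ℕ) : ℤ) + ((t % (K + 1) : ℕ) : ℤ))
      (by omega) (by omega) (by omega)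
    apply A
    rw [Int.cast_add, Int.cast_natCast]
    linear_combination Option.some.inj h
  · intro s t hs ht h
    have l1 := Nat.mod_lt s (show 0 < K + 1 by omega)
    have l2 := Nat.mod_lt t (show 0 < K + 1 by omega)
    rw [Sym2.eq_iff] at h
    by_cases hs0 : s % (K + 1) = 0 <;> by_cases ht0 : t % (K + 1) = 0
    · simp [hs0, ht0] at h
      exact div_eq_of_cast hs ht h (by omega)
    · simp [hs0, ht0] at h
    · simp [hs0, ht0] at h
    · simp only [hs0, ht0, if_false, Option.some.injEq] at h
      obtain ⟨h1, h2⟩ := pair_inj K _ _ _ _ (by omega) (by omega) (by omega) h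
      exact div_eq_of_cast hs ht h1 h2
  · intro t
    have e1 : (t + (K + 1) * (2 * K + 1)) / (K + 1) = t / (K + 1) + (2 * K + 1) :=
      Nat.add_mul_div_left _ _ (by omega)
    have e2 : (t + (K + 1) * (2 * K + 1)) % (K + 1) = t % (K + 1) :=
      Nat.add_mul_mod_self_left _ _ _
    simp only [e1, e2]
    rw [Nat.cast_add (t / (K + 1)), ZMod.natCast_self, add_zero]
    exact ⟨rfl, rfl⟩
  · intro s t h1 h2
    have l1 := Nat.mod_lt s (show 0 < K + 1 by omega)
    have l2 := Nat.mod_lt t (show 0 < K + 1 by omega)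
    have key : ∀ (i i' : ZMod (2 * K + 1)) (j l : ℕ), ¬ (j = 0 ∧ l = 0) →
        (i + j ≠ i' + l ∧ i + j ≠ i' - l ∧ i - j ≠ i' + l ∧
          i - j ≠ i' - (l : ZMod (2 * K + 1))) →
        some (i + j) ≠ some (i' + (l : ZMod (2 * K + 1))) ∧
        some (i + j) ≠ (if l = 0 then none else some (i' - (l : ZMod (2 * K + 1)))) ∧
        (if j = 0 then none else some (i - j)) ≠ some (i' + (l : ZMod (2 * K + 1))) ∧
        (if j = 0 then none else some (i - j)) ≠
          (if l = 0 then none else some (i' - (l : ZMod (2 * K + 1)))) := by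
      intro i i' j l h0 ⟨q1, q2, q3, q4⟩
      by_cases hj : j = 0 <;> by_cases hl : l = 0
      · exact absurd ⟨hj, hl⟩ h0
      all_goals
        simp only [hj, hl, if_true, if_false, ne_eq, Option.some.injEq, reduceCtorEq,
          not_false_eq_true, and_true, true_and]
      · subst hj; exact ⟨q1, q2⟩
      · subst hl; exact ⟨q1, q3⟩
      · exact ⟨q1, q2, q3, q4⟩
    rcases block (K + 1) s t (by omega) h1 (by omega) with ⟨e, hlt⟩ | ⟨e, hlt⟩
    · simp only [e]
      exact key _ _ _ _ (by omega) (disj_same K _ _ _ (by omega) (by omega))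
    · simp only [e]
      rw [Nat.cast_add (s / (K + 1)), Nat.cast_one]
      exact key _ _ _ _ (by omega) (disj_next K _ _ _ (by omega) (by omega))

end Lower

lemma cms_eq {n d : ℕ}
    (hlow : ∃ f : ZMod (edgeCount (⊤ : SimpleGraph (Fin n))) ≃
      (⊤ : SimpleGraph (Fin n)).edgeSet, CyclicGood _ f d)
    (hup : ∀ f : ZMod (edgeCount (⊤ : SimpleGraph (Fin n))) ≃
      (⊤ : SimpleGraph (Fin n)).edgeSet, ¬ CyclicGood _ f (d + 1)) :
    cms (⊤ : SimpleGraph (Fin n)) = d := by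
  apply IsGreatest.csSup_eq
  refine ⟨hlow, ?_⟩
  rintro e ⟨f, hf⟩
  by_contra hlt
  exact hup f (fun i j k hj hk hjk => hf i j k (by omega) (by omega) hjk)

/-- For every integer `n ≥ 4`, the cyclic matching sequencibility of
the complete graph `K_n` equals `⌊(n-1)/2⌋` if `n` is even and `⌊(n-3)/2⌋` if `n` is odd. -/
theorem cms_completeGraph (n : ℕ) (hn : 4 ≤ n) :
    cms (⊤ : SimpleGraph (Fin n)) = if Even n then (n - 1) / 2 else (n - 3) / 2 := by
  split_ifs with h
  · obtain ⟨K, rfl⟩ : ∃ K, n = 2 * K + 2 := by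
      obtain ⟨r, rfl⟩ := h
      exact ⟨r - 1, by omega⟩
    rw [show (2 * K + 2 - 1) / 2 = K by omega]
    exact cms_eq (lower_even K (by omega)) (fun f hf => upper_even (d := K + 1) (by omega) f hf)
  · obtain ⟨K, rfl⟩ := Nat.not_even_iff_odd.1 h
    rw [show (2 * K + 1 - 3) / 2 = K - 1 by omega]
    refine cms_eq (lower_odd K (by omega)) (fun f hf => ?_)
    rw [show K - 1 + 1 = K by omega] at hf
    exact upper_odd (by omega) f hf
end

section
/- For every integer m ≥ 2, the cyclic matching sequencibility of the complete graph K_{2m+1} equals m - 1. -/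
/-- Abstract data of a hypothetical cyclic ordering with matching number `m`, unrolled. -/
structure Bad {V : Type*} [Fintype V] [DecidableEq V] (m N : ℕ) (e : ℕ → Sym2 V) : Prop where
  hm : 2 ≤ m
  hN : N = m * (2 * m + 1)
  card : Fintype.card V = 2 * m + 1
  diag : ∀ i, ¬ (e i).IsDiag
  dis : ∀ i j v, i < j → j < i + m → v ∈ e i → v ∉ e j
  inj : ∀ i j, e i = e j → i ≡ j [MOD N]
  per : ∀ i, e (i + N) = e i
  deg : ∀ v w, Nat.count (fun i => v ∈ e i) N = Nat.count (fun i => w ∈ e i) N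

namespace Bad

variable {V : Type*} [Fintype V] [DecidableEq V] {m N : ℕ} {e : ℕ → Sym2 V}

theorem big (h : Bad m N e) : 2 * m + 1 < N := by
  have := h.hm
  rw [h.hN]; nlinarith

theorem ne (h : Bad m N e) {i j : ℕ} (hij : i < j) (hj : j < i + N) : e i ≠ e j := by
  intro he
  have h1 := (Nat.modEq_iff_dvd' hij.le).1 (h.inj i j he)
  have := Nat.le_of_dvd (by omega) h1
  omega

theorem not_both (h : Bad m N e) {i j : ℕ} {a b : V} (hab : a ≠ b) (hij : i < j)
    (hj : j < i + N) (h1 : a ∈ e i) (h2 : b ∈ e i) (h3 : a ∈ e j) (h4 : b ∈ e j) : False := by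
  apply h.ne hij hj
  rw [(Sym2.mem_and_mem_iff hab).1 ⟨h1, h2⟩, (Sym2.mem_and_mem_iff hab).1 ⟨h3, h4⟩]

theorem other (h : Bad m N e) {i : ℕ} {a : V} (ha : a ∈ e i) : ∃ b, b ≠ a ∧ b ∈ e i := by
  obtain ⟨b, hb⟩ := ha
  refine ⟨b, ?_, ?_⟩
  · rintro rfl
    exact h.diag i (by rw [hb]; simp)
  · rw [hb]; simp

theorem cardS (h : Bad m N e) (i : ℕ) : (e i).toFinset.card = 2 :=
  Sym2.card_toFinset_of_not_isDiag _ (h.diag i)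

/-- sets avoiding the `m - 1` inner edges have at most three elements -/
theorem small (h : Bad m N e) (i : ℕ) (T : Finset V)
    (hT : ∀ v ∈ T, ∀ j, i < j → j < i + m → v ∉ e j) : T.card ≤ 3 := by
  have hm := h.hm
  have hW : ((Finset.Ioo i (i + m)).biUnion (fun j => (e j).toFinset)).card = (m - 1) * 2 := by
    rw [Finset.card_biUnion]
    · simp [h.cardS]
    · intro x hx y hy hxy
      replace hx := Finset.mem_Ioo.1 hx
      replace hy := Finset.mem_Ioo.1 hy
      refine Finset.disjoint_left.2 ?_
      intro v hv hv'
      rw [Sym2.mem_toFinset] at hv hv'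
      rcases lt_or_gt_of_ne hxy with hl | hl
      · exact h.dis x y v hl (by omega) hv hv'
      · exact h.dis y x v hl (by omega) hv' hv
  have hd : Disjoint ((Finset.Ioo i (i + m)).biUnion (fun j => (e j).toFinset)) T := by
    rw [Finset.disjoint_right]
    intro v hv hv'
    simp only [Finset.mem_biUnion, Finset.mem_Ioo, Sym2.mem_toFinset] at hv'
    obtain ⟨j, hj, hj'⟩ := hv'
    exact hT v hv j hj.1 hj.2 hj'
  have := Finset.card_le_univ (((Finset.Ioo i (i + m)).biUnion (fun j => (e j).toFinset)) ∪ T)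
  rw [Finset.card_union_of_disjoint hd, h.card, hW] at this
  omega

theorem common (h : Bad m N e) (i : ℕ) : ∃ a, a ∈ e i ∧ a ∈ e (i + m) := by
  by_contra! hc
  have hd : Disjoint (e i).toFinset (e (i + m)).toFinset := by
    rw [Finset.disjoint_left]
    intro v hv hv'
    rw [Sym2.mem_toFinset] at hv hv'
    exact hc v hv hv'
  have := h.small i ((e i).toFinset ∪ (e (i + m)).toFinset) (by
    intro v hv j h1 h2
    simp only [Finset.mem_union, Sym2.mem_toFinset] at hv
    rcases hv with hv | hv
    · exact h.dis i j v h1 h2 hv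
    · intro hv'
      exact h.dis j (i + m) v h2 (by omega) hv' hv)
  rw [Finset.card_union_of_disjoint hd, h.cardS, h.cardS] at this
  omega

theorem missing (h : Bad m N e) (i : ℕ) (v : V)
    (hv : ∀ j, i ≤ j → j < i + m → v ∉ e j) : v ∈ e (i + m) := by
  by_contra hc
  have hm := h.hm
  have hbig := h.big
  have h3 : 3 ≤ ((e i).toFinset ∪ (e (i + m)).toFinset).card := by
    by_contra! hlt
    have h1 : (e i).toFinset = (e i).toFinset ∪ (e (i + m)).toFinset :=
      Finset.eq_of_subset_of_card_le Finset.subset_union_left (by rw [h.cardS]; omega)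
    have h2 : (e (i + m)).toFinset = (e i).toFinset ∪ (e (i + m)).toFinset :=
      Finset.eq_of_subset_of_card_le Finset.subset_union_right (by rw [h.cardS]; omega)
    refine h.ne (i := i) (j := i + m) (by omega) (by omega) ?_
    ext w
    rw [← Sym2.mem_toFinset, ← Sym2.mem_toFinset, h1, ← h2]
  have hn : v ∉ (e i).toFinset ∪ (e (i + m)).toFinset := by
    simp only [Finset.mem_union, Sym2.mem_toFinset, not_or]
    exact ⟨hv i le_rfl (by omega), hc⟩
  have := h.small i (insert v ((e i).toFinset ∪ (e (i + m)).toFinset)) (by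
    intro w hw j h1 h2
    simp only [Finset.mem_insert, Finset.mem_union, Sym2.mem_toFinset] at hw
    rcases hw with rfl | hw | hw
    · exact hv j h1.le h2
    · exact h.dis i j w h1 h2 hw
    · intro hv'
      exact h.dis j (i + m) w h2 (by omega) hv' hw)
  rw [Finset.card_insert_of_notMem hn] at this
  omega

theorem gap (h : Bad m N e) {i : ℕ} {v : V} (hv : v ∈ e i) (hn : v ∉ e (i + m)) :
    v ∈ e (i + m + 1) := by
  have := h.missing (i + 1) v (by
    intro j h1 h2
    rcases Nat.lt_or_ge j (i + m) with hl | hl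
    · exact h.dis i j v (by omega) hl hv
    · have : j = i + m := by omega
      rw [this]; exact hn)
  convert this using 2
  omega

/-- next occurrence of `v` after `i` -/
def nxt (e : ℕ → Sym2 V) (m : ℕ) (v : V) (i : ℕ) : ℕ := if v ∈ e (i + m) then i + m else i + m + 1

theorem nxt_mem (h : Bad m N e) {i : ℕ} {v : V} (hv : v ∈ e i) : v ∈ e (nxt e m v i) := by
  unfold nxt
  split_ifs with hc
  · exact hc
  · exact h.gap hv hc

theorem nxt_le (v : V) (i : ℕ) : i + m ≤ nxt e m v i ∧ nxt e m v i ≤ i + m + 1 := by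
  unfold nxt; split_ifs <;> omega

theorem nxt_min (h : Bad m N e) {i j : ℕ} {v : V} (hv : v ∈ e i) (h1 : i < j)
    (h2 : j < nxt e m v i) : v ∉ e j := by
  unfold nxt at h2
  split_ifs at h2 with hc
  · exact h.dis i j v h1 h2 hv
  · rcases Nat.lt_or_ge j (i + m) with hl | hl
    · exact h.dis i j v h1 hl hv
    · have : j = i + m := by omega
      rw [this]; exact hc

theorem nxt_count (h : Bad m N e) {i : ℕ} {v : V} (hv : v ∈ e i) :
    Nat.count (fun t => v ∈ e t) (nxt e m v i) = Nat.count (fun t => v ∈ e t) i + 1 := by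
  have key : ∀ d, i + 1 + d ≤ nxt e m v i →
      Nat.count (fun t => v ∈ e t) (i + 1 + d) = Nat.count (fun t => v ∈ e t) i + 1 := by
    intro d
    induction d with
    | zero => intro _; simp [Nat.count_succ, hv]
    | succ d ih =>
      intro hd
      rw [← add_assoc, Nat.count_succ, ih (by omega),
        if_neg (h.nxt_min hv (by omega) (by omega))]
  have hl := nxt_le (e := e) (m := m) v i
  have := h.hm
  have := key (nxt e m v i - (i + 1)) (by omega)
  rwa [show i + 1 + (nxt e m v i - (i + 1)) = nxt e m v i by omega] at this

theorem count_per (h : Bad m N e) (j : ℕ) (v : V) :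
    Nat.count (fun t => v ∈ e t) (j + N) =
      Nat.count (fun t => v ∈ e t) j + Nat.count (fun t => v ∈ e t) N := by
  rw [add_comm j N, Nat.count_add, add_comm]
  congr 1
  have : ∀ k, e (N + k) = e k := fun k => by rw [add_comm, h.per]
  simp only [this]

theorem two_short (h : Bad m N e) {j : ℕ} {a : V} (h0 : a ∈ e j) (h1 : a ∈ e (j + m))
    (h2 : a ∈ e (j + N - m)) : False := by
  have hm := h.hm
  have hbig := h.big
  obtain ⟨x, hxa, hx⟩ := h.other h0
  set P : ℕ → ℕ := fun k => (nxt e m a)^[k] j with hP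
  set Q : ℕ → ℕ := fun k => (nxt e m x)^[k] j with hQ
  have P0 : P 0 = j := rfl
  have Q0 : Q 0 = j := rfl
  have Ps : ∀ k, P (k + 1) = nxt e m a (P k) := fun k => Function.iterate_succ_apply' _ _ _
  have Qs : ∀ k, Q (k + 1) = nxt e m x (Q k) := fun k => Function.iterate_succ_apply' _ _ _
  have Pm : ∀ k, a ∈ e (P k) := by
    intro k
    induction k with
    | zero => exact h0
    | succ k ih => rw [Ps]; exact h.nxt_mem ih
  have Qm : ∀ k, x ∈ e (Q k) := by
    intro k
    induction k with
    | zero => exact hx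
    | succ k ih => rw [Qs]; exact h.nxt_mem ih
  have Pc : ∀ k, Nat.count (fun t => a ∈ e t) (P k) = Nat.count (fun t => a ∈ e t) j + k := by
    intro k
    induction k with
    | zero => rfl
    | succ k ih => rw [Ps, h.nxt_count (Pm k), ih]; rfl
  have Qc : ∀ k, Nat.count (fun t => x ∈ e t) (Q k) = Nat.count (fun t => x ∈ e t) j + k := by
    intro k
    induction k with
    | zero => rfl
    | succ k ih => rw [Qs, h.nxt_count (Qm k), ih]; rfl
  have Pl : ∀ k, P k + m ≤ P (k + 1) ∧ P (k + 1) ≤ P k + m + 1 := by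
    intro k; rw [Ps]; exact nxt_le _ _
  have Ql : ∀ k, Q k + m ≤ Q (k + 1) ∧ Q (k + 1) ≤ Q k + m + 1 := by
    intro k; rw [Qs]; exact nxt_le _ _
  have Qg : ∀ k, j + k ≤ Q k := by
    intro k
    induction k with
    | zero => exact le_rfl
    | succ k ih => have := Ql k; omega
  have xn : x ∉ e (j + m) := fun hc =>
    h.not_both hxa (by omega : j < j + m) (by omega) hx h0 hc h1
  have P1 : P 1 = j + m := by rw [Ps, P0, nxt, if_pos h1]
  have Q1 : Q 1 = j + m + 1 := by rw [Qs, Q0, nxt, if_neg xn]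
  have lt : ∀ k, Q (k + 1) < j + N → P (k + 1) < Q (k + 1) := by
    intro k
    induction k with
    | zero => intro _; simp only [zero_add]; omega
    | succ k ih =>
      intro hk
      have q := Ql (k + 1)
      have p := Pl (k + 1)
      have := ih (by omega)
      have hle : P (k + 1 + 1) ≤ Q (k + 1 + 1) := by omega
      rcases hle.lt_or_eq with hl | hl
      · exact hl
      · exfalso
        have hp := Pm (k + 1 + 1)
        rw [hl] at hp
        have := Qg (k + 1 + 1)
        exact h.not_both hxa (by omega) hk hx h0 (Qm (k + 1 + 1)) hp
  have hex : ∃ k, j + N ≤ Q k := ⟨N, Qg N⟩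
  obtain ⟨k, hk, hmin⟩ : ∃ k, j + N ≤ Q k ∧ ∀ l < k, ¬ (j + N ≤ Q l) :=
    ⟨Nat.find hex, Nat.find_spec hex, fun l hl => Nat.find_min hex hl⟩
  have hk2 : ∃ l, k = l + 1 + 1 := by
    rcases k with _ | _ | l
    · omega
    · simp only [zero_add] at hk; omega
    · exact ⟨l, rfl⟩
  obtain ⟨l, rfl⟩ := hk2
  have hlt := hmin (l + 1) (by omega)
  push Not at hlt
  have hPQ := lt l hlt
  have hxN : x ∈ e (j + N) := by rw [h.per]; exact hx
  have haN : a ∈ e (j + N) := by rw [h.per]; exact h0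
  have hQe : Q (l + 1 + 1) = j + N := by
    by_contra hne
    have : j + N < Q (l + 1 + 1) := by omega
    rw [Qs] at this
    exact h.nxt_min (Qm (l + 1)) hlt this hxN
  have hQne : Q (l + 1) ≠ j + N - m := by
    intro he
    have := Qm (l + 1)
    rw [he] at this
    exact h.not_both hxa (by omega : j + N - m < j + N) (by omega) this h2 hxN haN
  have q := Ql (l + 1)
  have p := Pl (l + 1)
  have hPlt : P (l + 1 + 1) < j + N := by omega
  have c1 := Pc (l + 1 + 1)
  have c2 := Qc (l + 1 + 1)
  rw [hQe, h.count_per] at c2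
  have c3 := h.count_per j a
  have c4 := h.deg a x
  have c5 : Nat.count (fun t => a ∈ e t) (P (l + 1 + 1) + 1) ≤
      Nat.count (fun t => a ∈ e t) (j + N) := Nat.count_monotone _ (by omega)
  rw [Nat.count_succ, if_pos (Pm (l + 1 + 1))] at c5
  omega

theorem two_short' (h : Bad m N e) {j : ℕ} {a : V} (h0 : a ∈ e j) (h1 : a ∈ e (j + m))
    (h2 : a ∈ e (j + m + m)) : False := by
  refine h.two_short h1 h2 ?_
  rw [show j + m + N - m = j + N by omega, h.per]
  exact h0

theorem false (h : Bad m N e) : False := by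
  have hm := h.hm
  have hbig := h.big
  obtain ⟨x, hx0, hx1⟩ := h.common 0
  obtain ⟨a, hax, ha0⟩ := h.other hx0
  have ha1 : a ∉ e (0 + m) := fun hc =>
    h.not_both hax (by omega : 0 < 0 + m) (by omega) ha0 hx0 hc hx1
  have ha2 := h.gap ha0 ha1
  have hx2 : x ∈ e (0 + m + m + 1) := h.gap hx1 (fun hc => h.two_short' hx0 hx1 hc)
  have ha3 : a ∈ e (0 + m + m + 1) := by
    obtain ⟨c, hc1, hc2⟩ := h.common (0 + m + 1)
    have e1 : 0 + m + 1 + m = 0 + m + m + 1 := by omega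
    by_cases hca : c = a
    · rw [← hca, ← e1]; exact hc2
    · exfalso
      obtain ⟨b, hb1, hb2⟩ := h.common 1
      have e2 : 1 + m = 0 + m + 1 := by omega
      rw [e2] at hb2
      have hba : b ≠ a := by
        rintro rfl
        exact h.dis 0 1 b (by omega) (by omega) ha0 hb1
      have hbc : b = c := by
        have := (Sym2.mem_and_mem_iff hca).1 ⟨hc1, ha2⟩
        rw [this] at hb2
        simp at hb2
        tauto
      subst hbc
      refine h.two_short' hb1 (by rw [e2]; exact hb2) (by rw [e2]; exact hc2)
  exact h.not_both hax (by omega : 0 < 0 + m + m + 1) (by omega) ha0 hx0 ha3 hx2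

end Bad

theorem edgeCount_top_s2 (m : ℕ) {V : Type*} [Fintype V] (hV : Fintype.card V = 2 * m + 1) :
    edgeCount (⊤ : SimpleGraph V) = m * (2 * m + 1) := by
  classical
  unfold edgeCount
  rw [Nat.card_eq_fintype_card, ← SimpleGraph.edgeFinset_card,
    SimpleGraph.card_edgeFinset_top_eq_card_choose_two, hV, Nat.choose_two_right]
  apply Nat.div_eq_of_eq_mul_left (by norm_num)
  simp only [Nat.add_sub_cancel]
  ring

theorem count_deg {V : Type*} [Fintype V] [DecidableEq V] {N : ℕ} [NeZero N]
    (f : ZMod N ≃ (⊤ : SimpleGraph V).edgeSet) (v : V) :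
    Nat.count (fun i : ℕ => v ∈ (f (i : ZMod N) : Sym2 V)) N = Fintype.card V - 1 := by
  rw [Nat.count_eq_card_filter_range, ← SimpleGraph.complete_graph_degree v,
    ← SimpleGraph.card_incidenceFinset_eq_degree]
  apply Finset.card_bij (fun (i : ℕ) _ => (f (i : ZMod N) : Sym2 V))
  · intro i hi
    simp only [Finset.mem_filter] at hi
    rw [SimpleGraph.mem_incidenceFinset]
    exact ⟨(f (i : ZMod N)).2, hi.2⟩
  · intro i hi j hj hij
    simp only [Finset.mem_filter, Finset.mem_range] at hi hj
    have := f.injective (Subtype.ext hij)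
    rw [ZMod.natCast_eq_natCast_iff] at this
    exact Nat.ModEq.eq_of_lt_of_lt this hi.1 hj.1
  · intro b hb
    rw [SimpleGraph.mem_incidenceFinset] at hb
    refine ⟨(f.symm ⟨b, hb.1⟩).val, ?_, ?_⟩
    · simp only [Finset.mem_filter, Finset.mem_range]
      refine ⟨ZMod.val_lt _, ?_⟩
      simpa using hb.2
    · simp

theorem upper (m : ℕ) (hm : 2 ≤ m) {V : Type*} [Fintype V] [DecidableEq V]
    (hV : Fintype.card V = 2 * m + 1)
    (f : ZMod (edgeCount (⊤ : SimpleGraph V)) ≃ (⊤ : SimpleGraph V).edgeSet)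
    (hf : CyclicGood _ f m) : False := by
  have hN := edgeCount_top_s2 m hV
  generalize edgeCount (⊤ : SimpleGraph V) = N at *
  have : NeZero N := ⟨by rw [hN]; positivity⟩
  refine Bad.false (m := m) (N := N) (e := fun i => (f (i : ZMod N) : Sym2 V)) ?_
  refine ⟨hm, hN, hV, ?_, ?_, ?_, ?_, ?_⟩
  · intro i
    exact SimpleGraph.not_isDiag_of_mem_edgeSet _ (f (i : ZMod N)).2
  · intro i j v hij hj hv
    have := hf (i : ZMod N) 0 (j - i) (by omega) (by omega) (by omega) v (by simpa using hv)
    rwa [← Nat.cast_add, show i + (j - i) = j by omega] at this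
  · intro i j hij
    rw [← ZMod.natCast_eq_natCast_iff]
    exact f.injective (Subtype.ext hij)
  · intro i
    simp
  · intro v w
    rw [count_deg, count_deg]

/-- The ordering realising `m - 1`. -/
def ordE (m n : ℕ) : Sym2 (ZMod (2 * m + 1)) :=
  s((((n / m : ℕ) : ℤ) + ((n % m : ℕ) + 1 : ℤ) : ℤ), (((n / m : ℕ) : ℤ) - ((n % m : ℕ) + 1 : ℤ) : ℤ))

theorem small_dvd {m : ℕ} {z : ℤ} (h : ((2 * m + 1 : ℕ) : ℤ) ∣ z) (h1 : -(2 * m + 1 : ℤ) < z)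
    (h2 : z < 2 * m + 1) : z = 0 := by
  apply Int.eq_zero_of_abs_lt_dvd h
  rw [abs_lt]; push_cast; constructor <;> linarith

theorem ordE_ne (m n : ℕ) (hm : 2 ≤ m) : ordE m n ∈ (⊤ : SimpleGraph (ZMod (2 * m + 1))).edgeSet := by
  unfold ordE
  rw [SimpleGraph.mem_edgeSet, SimpleGraph.top_adj, Ne, ZMod.intCast_eq_intCast_iff_dvd_sub]
  intro h
  have hr : n % m < m := Nat.mod_lt _ (by omega)
  have := small_dvd h (by omega) (by omega)
  omega

theorem ordE_per (m n : ℕ) (hm : 2 ≤ m) : ordE m (n + m * (2 * m + 1)) = ordE m n := by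
  unfold ordE
  rw [Nat.add_mul_mod_self_left, Nat.add_mul_div_left _ _ (by omega)]
  have : ((2 * m + 1 : ℕ) : ZMod (2 * m + 1)) = 0 := ZMod.natCast_self _
  push_cast at this ⊢
  rw [this, add_zero]

theorem ordE_inj (m n n' : ℕ) (hm : 2 ≤ m) (hn : n < m * (2 * m + 1)) (hn' : n' < m * (2 * m + 1))
    (h : ordE m n = ordE m n') : n = n' := by
  unfold ordE at h
  have hr : n % m < m := Nat.mod_lt _ (by omega)
  have hr' : n' % m < m := Nat.mod_lt _ (by omega)
  have ht : n / m < 2 * m + 1 := Nat.div_lt_of_lt_mul hn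
  have ht' : n' / m < 2 * m + 1 := Nat.div_lt_of_lt_mul hn'
  have e1 := Nat.div_add_mod n m
  have e2 := Nat.div_add_mod n' m
  have hco : IsCoprime (((2 * m + 1 : ℕ) : ℤ)) 2 := ⟨1, -m, by push_cast; ring⟩
  suffices hs : n / m = n' / m ∧ n % m = n' % m by
    rw [← e1, ← e2, hs.1, hs.2]
  generalize n / m = t at *
  generalize n' / m = t' at *
  generalize n % m = r at *
  generalize n' % m = r' at *
  rw [Sym2.eq_iff] at h
  simp only [ZMod.intCast_eq_intCast_iff_dvd_sub] at h
  have htt : t = t' := by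
    have hd : ((2 * m + 1 : ℕ) : ℤ) ∣ 2 * ((t' : ℤ) - t) := by
      rcases h with ⟨a, b⟩ | ⟨a, b⟩
      · refine (dvd_add a b).trans (dvd_of_eq ?_); ring
      · refine (dvd_add a b).trans (dvd_of_eq ?_); ring
    have := small_dvd (hco.dvd_of_dvd_mul_left hd) (by omega) (by omega)
    omega
  subst htt
  refine ⟨rfl, ?_⟩
  rcases h with ⟨a, b⟩ | ⟨a, b⟩
  · have := small_dvd a (by omega) (by omega)
    omega
  · have := small_dvd a (by omega) (by omega)
    omega

theorem ordE_disj (m n D : ℕ) (hm : 2 ≤ m) (h0 : 0 < D) (hD : D + 2 ≤ m) :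
    edgesDisjoint (ordE m n) (ordE m (n + D)) := by
  have hr : n % m < m := Nat.mod_lt _ (by omega)
  have hr' : (n + D) % m < m := Nat.mod_lt _ (by omega)
  have e1 := Nat.div_add_mod n m
  have e2 := Nat.div_add_mod (n + D) m
  have hcase : ((n + D) / m = n / m ∧ (n + D) % m = n % m + D) ∨
      ((n + D) / m = n / m + 1 ∧ (n + D) % m + m = n % m + D) := by
    rcases Nat.lt_or_ge (n % m + D) m with hl | hl
    · left
      have : (n + D) / m = n / m := by
        apply Nat.div_eq_of_lt_le <;> nlinarith [Nat.zero_le (n % m)]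
      refine ⟨this, ?_⟩
      rw [this] at e2; omega
    · right
      have : (n + D) / m = n / m + 1 := by
        apply Nat.div_eq_of_lt_le <;> nlinarith [Nat.zero_le (n % m)]
      refine ⟨this, ?_⟩
      rw [this, mul_add] at e2; omega
  intro v hv hv'
  unfold ordE at hv hv'
  clear e1 e2
  generalize n / m = t at *
  generalize (n + D) / m = t' at *
  generalize n % m = r at *
  generalize (n + D) % m = r' at *
  rw [Sym2.mem_iff] at hv hv'
  rcases hv with rfl | rfl <;> rcases hv' with h | h <;>
    rw [ZMod.intCast_eq_intCast_iff_dvd_sub] at h <;>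
    have := small_dvd h (by omega) (by omega) <;> omega

theorem lower (m : ℕ) (hm : 2 ≤ m) : ∃ f : ZMod (edgeCount (⊤ : SimpleGraph (ZMod (2 * m + 1)))) ≃
    (⊤ : SimpleGraph (ZMod (2 * m + 1))).edgeSet, CyclicGood _ f (m - 1) := by
  have hc : Fintype.card (ZMod (2 * m + 1)) = 2 * m + 1 := ZMod.card _
  have hN := edgeCount_top_s2 m hc
  have hcard : Nat.card (⊤ : SimpleGraph (ZMod (2 * m + 1))).edgeSet = m * (2 * m + 1) := hN
  rw [hN]
  have hpos : 0 < m * (2 * m + 1) := by positivity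
  have : NeZero (m * (2 * m + 1)) := ⟨by omega⟩
  let g : ZMod (m * (2 * m + 1)) → (⊤ : SimpleGraph (ZMod (2 * m + 1))).edgeSet :=
    fun i => ⟨ordE m i.val, ordE_ne m _ hm⟩
  have ginj : Function.Injective g := by
    intro i j hij
    exact ZMod.val_injective _
      (ordE_inj m _ _ hm (ZMod.val_lt i) (ZMod.val_lt j) (congrArg Subtype.val hij))
  have gbij : Function.Bijective g := by
    classical
    rw [Fintype.bijective_iff_injective_and_card]
    refine ⟨ginj, ?_⟩
    rw [ZMod.card, ← hcard, Nat.card_eq_fintype_card]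
  have hmod : ∀ n, ordE m (n % (m * (2 * m + 1))) = ordE m n := by
    intro n
    have hk : ∀ k a, ordE m (a + m * (2 * m + 1) * k) = ordE m a := by
      intro k a
      induction k with
      | zero => simp
      | succ k ih => rw [mul_add, mul_one, ← add_assoc, ordE_per m _ hm, ih]
    conv_rhs => rw [← Nat.mod_add_div n (m * (2 * m + 1))]
    rw [hk]
  have gval : ∀ (i : ZMod (m * (2 * m + 1))) (j : ℕ),
      ((g (i + (j : ZMod _))) : Sym2 (ZMod (2 * m + 1))) = ordE m (i.val + j) := by
    intro i j
    change ordE m (ZMod.val (i + (j : ZMod _))) = _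
    rw [ZMod.val_add, ZMod.val_natCast, Nat.add_mod_mod, hmod]
  refine ⟨Equiv.ofBijective g gbij, ?_⟩
  have key : ∀ (i : ZMod (m * (2 * m + 1))) (j k : ℕ), j < k → k < m - 1 →
      edgesDisjoint (g (i + (j : ZMod _)) : Sym2 (ZMod (2 * m + 1))) (g (i + (k : ZMod _))) := by
    intro i j k hjk hk
    rw [gval, gval, show i.val + k = i.val + j + (k - j) by omega]
    exact ordE_disj m _ _ hm (by omega) (by omega)
  intro i j k hj hk hjk
  simp only [Equiv.ofBijective_apply]
  rcases lt_or_gt_of_ne hjk with hl | hl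
  · exact key i j k hl hk
  · intro v hv hw
    exact key i k j hl hj v hw hv

/-- For every integer `m ≥ 2`, `cms (K_{2m+1}) = m - 1`. -/
theorem cms_completeGraph_odd (m : ℕ) (hm : 2 ≤ m) :
    cms (⊤ : SimpleGraph (Fin (2 * m + 1))) = m - 1 := by
  have hub : ∀ d ∈ {d : ℕ | ∃ f : ZMod (edgeCount (⊤ : SimpleGraph (Fin (2 * m + 1)))) ≃
      (⊤ : SimpleGraph (Fin (2 * m + 1))).edgeSet, CyclicGood _ f d}, d ≤ m - 1 := by
    rintro d ⟨f, hf⟩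
    by_contra hd
    exact upper m hm (Fintype.card_fin _) f
      (fun i j k hj hk hjk => hf i j k (by omega) (by omega) hjk)
  apply le_antisymm
  · exact csSup_le' hub
  · exact le_csSup ⟨m - 1, hub⟩ (lower m hm)
end

section
/- For every integer n ≥ 3, let G be the 3-regular bipartite graph with parts {a_0,...,a_{n-1}} and {b_0,...,b_{n-1}} where a_i is adjacent to b_j if and only if j - i ≡ -1, 0, or 1 (mod n) (i.e., G has biadjacency matrix P^{-1} + I + P for the full-cycle permutation matrix P of order n). Then cms(G) = ms(G) = n - 1. -/
/-- The `3`-regular bipartite graph on parts `{a_0, …, a_{n-1}}` and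
`{b_0, …, b_{n-1}}` where `a_i ~ b_j` iff `j - i ≡ -1, 0, 1 (mod n)`; its
biadjacency matrix is `P⁻¹ + I + P` for the full-cycle permutation matrix `P`. -/
def circulantBipartite (n : ℕ) : SimpleGraph (Fin n ⊕ Fin n) :=
  SimpleGraph.fromRel (fun x y =>
    ∃ i j : Fin n, x = Sum.inl i ∧ y = Sum.inr j ∧
      (((j : ZMod n) - (i : ZMod n) = -1) ∨ ((j : ZMod n) = (i : ZMod n)) ∨
        ((j : ZMod n) - (i : ZMod n) = 1)))

/-- a-indices -/
def sA (n T : ℕ) : ℕ :=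
  if n % 2 = 0 then
    if T < n then T
    else if T < 2 * n then (if (T - n) % 2 = 0 then T - n + 1 else T - n - 1)
    else T - 2 * n
  else
    if T < n then T
    else if T < 2 * n then
      (if T = n then 0 else if T = n + 1 then 1 else if T = 2 * n - 1 then 0
        else if (T - n) % 2 = 0 then T - n + 1 else T - n - 1)
    else if T = 2 * n then n - 1 else T - 2 * n

/-- b-indices -/
def sB (n T : ℕ) : ℕ :=
  if n % 2 = 0 then
    if T < n then (if T = 0 then n - 1 else T)
    else if T < 2 * n then T - n
    else if T = 2 * n then 0
    else if T = 3 * n - 1 then 0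
    else if (T - 2 * n) % 2 = 0 then T - 2 * n - 1 else T - 2 * n + 1
  else
    if T < n then T
    else if T < 2 * n then
      (if T = n then 1 else if T = n + 1 then 0 else T - n)
    else if T = 2 * n then 0
    else if (T - 2 * n) % 2 = 0 then T - 2 * n - 1 else T - 2 * n + 1

theorem sA_lt (n T : ℕ) (hn : 3 ≤ n) (hT : T < 3 * n) : sA n T < n := by
  unfold sA; split_ifs <;> omega

theorem sB_lt (n T : ℕ) (hn : 3 ≤ n) (hT : T < 3 * n) : sB n T < n := by
  unfold sB; split_ifs <;> omega

theorem sAB_adj (n T : ℕ) (hn : 3 ≤ n) (hT : T < 3 * n) :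
    sB n T = sA n T ∨ sB n T = sA n T + 1 ∨ sA n T = sB n T + 1 ∨
    (sA n T = 0 ∧ sB n T = n - 1) ∨ (sB n T = 0 ∧ sA n T = n - 1) := by
  unfold sA sB; split_ifs <;> omega

theorem sA_gap (n s t : ℕ) (hn : 3 ≤ n) (hst : s < t) (ht : t < 3 * n) (h : sA n s = sA n t) :
    s + (n - 1) ≤ t ∧ t + (n - 1) ≤ s + 3 * n := by
  unfold sA at h; split_ifs at h <;> omega

theorem sB_gap (n s t : ℕ) (hn : 3 ≤ n) (hst : s < t) (ht : t < 3 * n) (h : sB n s = sB n t) :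
    s + (n - 1) ≤ t ∧ t + (n - 1) ≤ s + 3 * n := by
  unfold sB at h; split_ifs at h <;> omega

set_option maxHeartbeats 4000000 in
theorem sAB_inj (n s t : ℕ) (hn : 3 ≤ n) (hst : s < t) (ht : t < 3 * n) (h : sA n s = sA n t)
    (h' : sB n s = sB n t) : False := by
  have h1 := sA_gap n s t hn hst ht h
  have h2 := sB_gap n s t hn hst ht h'
  unfold sA at h; unfold sB at h'
  by_cases hp : n % 2 = 0
  · simp only [hp, if_true] at h h'
    split_ifs at h <;> first | omega | (split_ifs at h' <;> omega)
  · simp only [hp, if_false] at h h'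
    split_ifs at h <;> first | omega | (split_ifs at h' <;> omega)

theorem circ_edge (n : ℕ) (e : Sym2 (Fin n ⊕ Fin n)) (he : e ∈ (circulantBipartite n).edgeSet) :
    ∃ i j : Fin n, e = s(Sum.inl i, Sum.inr j) ∧
      ((((j : ℕ) : ZMod n) - ((i : ℕ) : ZMod n) = -1) ∨ (((j : ℕ) : ZMod n) = ((i : ℕ) : ZMod n)) ∨
        (((j : ℕ) : ZMod n) - ((i : ℕ) : ZMod n) = 1)) := by
  induction e using Sym2.ind with
  | _ x y =>
    rw [SimpleGraph.mem_edgeSet, circulantBipartite, SimpleGraph.fromRel_adj] at he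
    rcases he with ⟨-, ⟨i, j, rfl, rfl, h⟩ | ⟨i, j, rfl, rfl, h⟩⟩
    · exact ⟨i, j, rfl, h⟩
    · exact ⟨i, j, Sym2.eq_swap, h⟩

theorem circ_card_le (n : ℕ) (hn : 3 ≤ n) :
    Nat.card (circulantBipartite n).edgeSet ≤ 3 * n := by
  classical
  have : NeZero n := ⟨by omega⟩
  let F : Fin n × ZMod n → Sym2 (Fin n ⊕ Fin n) := fun p =>
    s(Sum.inl p.1, Sum.inr ⟨(((p.1 : ℕ) : ZMod n) + p.2).val, ZMod.val_lt _⟩)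
  let S : Finset (Fin n × ZMod n) := Finset.univ ×ˢ ({-1, 0, 1} : Finset (ZMod n))
  have hsub : (circulantBipartite n).edgeSet ⊆ ((S.image F : Finset _) : Set _) := by
    intro e he
    obtain ⟨i, j, rfl, h⟩ := circ_edge n e he
    rw [Finset.mem_coe, Finset.mem_image]
    refine ⟨(i, ((j : ℕ) : ZMod n) - ((i : ℕ) : ZMod n)), ?_, ?_⟩
    · simp only [S, Finset.mem_product, Finset.mem_univ, true_and, Finset.mem_insert,
        Finset.mem_singleton]
      rcases h with h | h | h
      · exact Or.inl h
      · exact Or.inr (Or.inl (by rw [h, sub_self]))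
      · exact Or.inr (Or.inr h)
    · have : (⟨(((i : ℕ) : ZMod n) + (((j : ℕ) : ZMod n) - ((i : ℕ) : ZMod n))).val,
          ZMod.val_lt _⟩ : Fin n) = j := by
        apply Fin.ext
        simp [ZMod.val_natCast, Nat.mod_eq_of_lt j.2]
      simp only [F, this]
  have h1 := Nat.card_mono (Finset.finite_toSet _) hsub
  have h2 : Nat.card ((S.image F : Finset _) : Set (Sym2 (Fin n ⊕ Fin n))) = (S.image F).card := by
    simp
  have h3 : (S.image F).card ≤ S.card := Finset.card_image_le
  have h4 : S.card ≤ n * 3 := by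
    rw [Finset.card_product]
    refine Nat.mul_le_mul (by simp) Finset.card_le_three
  omega

theorem circ_adj (n T : ℕ) (hn : 3 ≤ n) (hT : T < 3 * n) :
    s(Sum.inl (⟨sA n T, sA_lt n T hn hT⟩ : Fin n), Sum.inr (⟨sB n T, sB_lt n T hn hT⟩ : Fin n))
      ∈ (circulantBipartite n).edgeSet := by
  rw [SimpleGraph.mem_edgeSet, circulantBipartite, SimpleGraph.fromRel_adj]
  refine ⟨by simp, Or.inl ⟨_, _, rfl, rfl, ?_⟩⟩
  have hc : ((n - 1 : ℕ) : ZMod n) = -1 := by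
    rw [Nat.cast_sub (by omega)]; simp
  rcases sAB_adj n T hn hT with h | h | h | ⟨h, h'⟩ | ⟨h, h'⟩
  · right; left; simp [h]
  · right; right; simp [h]
  · left; simp [h]
  · left; simp only [h, h', hc]; simp
  · right; right; simp only [h, h', hc]; simp

/-- The edge at position `T` of our ordering. -/
def sE (n : ℕ) (hn : 3 ≤ n) (T : Fin (3 * n)) : (circulantBipartite n).edgeSet :=
  ⟨_, circ_adj n T hn T.2⟩

theorem sE_inj (n : ℕ) (hn : 3 ≤ n) : Function.Injective (sE n hn) := by
  intro s t h
  have h1 : (sE n hn s).1 = (sE n hn t).1 := by rw [h]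
  simp only [sE, Sym2.eq_iff, Sum.inl.injEq, Sum.inr.injEq, Fin.mk.injEq, reduceCtorEq,
    and_self, or_false] at h1
  rcases lt_trichotomy (s : ℕ) t with hlt | heq | hlt
  · exact (sAB_inj n s t hn hlt t.2 h1.1 h1.2).elim
  · exact Fin.ext heq
  · exact (sAB_inj n t s hn hlt s.2 h1.1.symm h1.2.symm).elim

theorem circ_card (n : ℕ) (hn : 3 ≤ n) : edgeCount (circulantBipartite n) = 3 * n := by
  apply le_antisymm (circ_card_le n hn)
  have := Nat.card_le_card_of_injective _ (sE_inj n hn)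
  simpa using this

theorem disj_iff (n : ℕ) (a b a' b' : Fin n) :
    edgesDisjoint s((Sum.inl a : Fin n ⊕ Fin n), Sum.inr b) s(Sum.inl a', Sum.inr b') ↔
      a ≠ a' ∧ b ≠ b' := by
  simp [edgesDisjoint]

theorem sE_disj (n : ℕ) (hn : 3 ≤ n) (s t : Fin (3 * n)) (hst : s ≠ t)
    (h : ((s : ℕ) < t + (n - 1) ∧ (t : ℕ) < s + (n - 1)) ∨
      (s : ℕ) + 3 * n < t + (n - 1) ∨ (t : ℕ) + 3 * n < s + (n - 1)) :
    edgesDisjoint (sE n hn s).1 (sE n hn t).1 := by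
  have hne : (s : ℕ) ≠ t := fun h => hst (Fin.ext h)
  have := s.2
  have := t.2
  simp only [sE]
  rw [disj_iff]
  simp only [ne_eq, Fin.mk.injEq]
  constructor <;> intro heq <;> rcases Nat.lt_or_gt_of_ne hne with hlt | hlt
  · have := sA_gap n s t hn hlt t.2 heq; omega
  · have := sA_gap n t s hn hlt s.2 heq.symm; omega
  · have := sB_gap n s t hn hlt t.2 heq; omega
  · have := sB_gap n t s hn hlt s.2 heq.symm; omega

theorem exists_cyclic (n : ℕ) (hn : 3 ≤ n) (N : ℕ) (hN : N = 3 * n) :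
    ∃ f : ZMod N ≃ (circulantBipartite n).edgeSet, CyclicGood _ f (n - 1) := by
  subst hN
  have : NeZero (3 * n) := ⟨by omega⟩
  let g : ZMod (3 * n) → (circulantBipartite n).edgeSet :=
    fun x => sE n hn ⟨x.val, ZMod.val_lt x⟩
  have hginj : Function.Injective g := by
    intro x y h
    have := sE_inj n hn h
    exact ZMod.val_injective _ (by simpa using this)
  have hcard : Nat.card (ZMod (3 * n)) = Nat.card (circulantBipartite n).edgeSet := by
    rw [Nat.card_zmod]; exact (circ_card n hn).symm
  have : Finite (circulantBipartite n).edgeSet := Set.toFinite _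
  have hgbij : Function.Bijective g := (Nat.bijective_iff_injective_and_card g).2 ⟨hginj, hcard⟩
  refine ⟨Equiv.ofBijective g hgbij, ?_⟩
  intro i j k hj hk hjk
  have hi := ZMod.val_lt i
  have key : ∀ m : ℕ, m < n - 1 → (i + (m : ZMod (3 * n))).val = i.val + m ∨
      (i + (m : ZMod (3 * n))).val + 3 * n = i.val + m := by
    intro m hm
    rw [ZMod.val_add, ZMod.val_natCast, Nat.mod_eq_of_lt (show m < 3 * n by omega)]
    rcases Nat.lt_or_ge (i.val + m) (3 * n) with h | h
    · left; exact Nat.mod_eq_of_lt h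
    · right
      rw [Nat.mod_eq_sub_mod h, Nat.mod_eq_of_lt (by omega)]; omega
  have hj' := key j hj
  have hk' := key k hk
  simp only [Equiv.ofBijective_apply, g]
  apply sE_disj
  · simp only [ne_eq, Fin.mk.injEq]; omega
  · simp only []
    have := ZMod.val_lt (i + (j : ZMod (3 * n)))
    have := ZMod.val_lt (i + (k : ZMod (3 * n)))
    omega

theorem finEquiv_eq (N : ℕ) [NeZero N] (j : Fin N) :
    ZMod.finEquiv N j = ((j : ℕ) : ZMod N) := by
  cases N with
  | zero => exact j.elim0
  | succ m => exact (Fin.cast_val_eq_self j).symm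

theorem cyclic_to_linear {V : Type*} (G : SimpleGraph V) (hpos : 0 < edgeCount G)
    (f : ZMod (edgeCount G) ≃ G.edgeSet) (d : ℕ) (h : CyclicGood G f d) :
    ∃ g : Fin (edgeCount G) ≃ G.edgeSet, LinearGood G g d := by
  have : NeZero (edgeCount G) := ⟨by omega⟩
  refine ⟨(ZMod.finEquiv (edgeCount G)).toEquiv.trans f, ?_⟩
  have hc : ∀ j : Fin (edgeCount G),
      ZMod.finEquiv (edgeCount G) j = ((j : ℕ) : ZMod (edgeCount G)) := by
    exact finEquiv_eq _
  have hs : ∀ e₁ e₂ : Sym2 V, edgesDisjoint e₁ e₂ → edgesDisjoint e₂ e₁ :=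
    fun e₁ e₂ h v h2 h1 => h v h1 h2
  have main : ∀ j k : Fin (edgeCount G), (j : ℕ) < k → (k : ℕ) < j + d →
      edgesDisjoint (f (j : ℕ) : Sym2 V) (f (k : ℕ) : Sym2 V) := by
    intro j k hjk hkd
    have := h ((j : ℕ) : ZMod (edgeCount G)) 0 (k - j) (by omega) (by omega) (by omega)
    rw [← Nat.cast_add, ← Nat.cast_add, Nat.add_zero, Nat.add_sub_cancel' hjk.le] at this
    exact this
  intro j k hjk h1 h2
  simp only [Equiv.trans_apply, RingEquiv.toEquiv_eq_coe, EquivLike.coe_coe, hc]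
  rcases lt_trichotomy (j : ℕ) k with hlt | heq | hlt
  · exact main j k hlt h2
  · exact (hjk (Fin.ext heq)).elim
  · exact hs _ _ (main k j hlt h1)

theorem linear_bound (n : ℕ) (hn : 3 ≤ n) (d : ℕ)
    (f : Fin (edgeCount (circulantBipartite n)) ≃ (circulantBipartite n).edgeSet)
    (h : LinearGood _ f d) : d ≤ n - 1 := by
  by_contra hd
  have hN := circ_card n hn
  choose a b hab using fun T => circ_edge n (f T : Sym2 _) (f T).2
  have hab1 := fun T => (hab T).1
  have hdis : ∀ j k : Fin (edgeCount (circulantBipartite n)), j ≠ k → (j : ℕ) < k + n →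
      (k : ℕ) < j + n → a j ≠ a k ∧ b j ≠ b k := by
    intro j k hjk h1 h2
    have := h j k hjk (by omega) (by omega)
    rwa [hab1 j, hab1 k, disj_iff] at this
  have key : ∀ c : Fin (edgeCount (circulantBipartite n)) → Fin n,
      (∀ j k : Fin (edgeCount (circulantBipartite n)), j ≠ k → (j : ℕ) < k + n →
      (k : ℕ) < j + n → c j ≠ c k) → c ⟨n, by omega⟩ = c ⟨0, by omega⟩ := by
    intro c hc
    let w : Fin n → Fin n := fun x => c ⟨x, by omega⟩
    have hw : Function.Injective w := by
      intro x y hxy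
      by_contra hne
      exact hc ⟨x, by omega⟩ ⟨y, by omega⟩ (by simpa [Fin.ext_iff] using hne)
        (by simp only []; omega) (by simp only []; omega) hxy
    obtain ⟨x, hx⟩ := (Finite.injective_iff_surjective.1 hw) (c ⟨n, by omega⟩)
    rcases Nat.eq_zero_or_pos (x : ℕ) with h0 | h0
    · rw [← hx]; simp only [w, h0]
    · exact (hc ⟨x, by omega⟩ ⟨n, by omega⟩ (by simp [Fin.ext_iff]; omega)
        (by simp only []; omega) (by simp only []; omega) hx).elim
  have e1 := key a (fun j k x y z => (hdis j k x y z).1)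
  have e2 := key b (fun j k x y z => (hdis j k x y z).2)
  have : f ⟨n, by omega⟩ = f ⟨0, by omega⟩ := by
    apply Subtype.ext
    rw [hab1, hab1, e1, e2]
  have := f.injective this
  simp at this
  omega

/-- For every integer `n ≥ 3`, the `3`-regular bipartite graph `G`
with biadjacency matrix `P⁻¹ + I + P` satisfies `cms G = ms G = n - 1`. -/
theorem cms_ms_circulantBipartite (n : ℕ) (hn : 3 ≤ n) :
    cms (circulantBipartite n) = n - 1 ∧ ms (circulantBipartite n) = n - 1 := by
  have hN := circ_card n hn
  obtain ⟨f, hf⟩ := exists_cyclic n hn _ hN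
  constructor
  · apply IsGreatest.csSup_eq
    refine ⟨⟨f, hf⟩, ?_⟩
    rintro d ⟨g, hg⟩
    obtain ⟨g', hg'⟩ := cyclic_to_linear _ (by omega) g d hg
    exact linear_bound n hn d g' hg'
  · apply IsGreatest.csSup_eq
    refine ⟨⟨by omega, cyclic_to_linear _ (by omega) f _ hf⟩, ?_⟩
    rintro d ⟨-, g, hg⟩
    exact linear_bound n hn d g hg
end
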